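/- Let R > 0 and 3R/2 ≤ s < t ≤ 2R, let v : ℝ³ → ℝ³ be a smooth vector field and θ : ℝ³ → ℝ a smooth function, and set J₆ = (1/(t−s)) ∫_{B_t ∖ B_s} |v||θ| dx. Let q ∈ [1, 2) and r ∈ [2, 6]. Then there exists a constant C > 0, depending only on q and r (and not on v, θ, R, s, t), such that J₆ ≤ (C/(t−s)) R^{3(1/2 − 1/r)} ‖v‖_{L^q(B_t ∖ B_R)}^{2q/(6−q)} ‖θ‖_{L^r(B_t ∖ B_R)} ‖v‖_{L⁶(B_t ∖ B_R)}^{3(2−q)/(6−q)}. -/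

import Mathlib

open MeasureTheory Filter Metric

noncomputable section

/-- `L^p` norm of a scalar function on a set `E ⊆ ℝ³`. -/
def lpS (g : EuclideanSpace ℝ (Fin 3) → ℝ) (p : ℝ) (E : Set (EuclideanSpace ℝ (Fin 3))) : ℝ :=
  (∫ x in E, |g x| ^ p) ^ (1 / p)

theorem holder_four {α : Type*} [MeasurableSpace α] {μ : Measure α} [IsFiniteMeasure μ]
    {f g h : α → ℝ} (hf : Integrable f μ) (hg : Integrable g μ) (hh : Integrable h μ)
    (hf0 : ∀ x, 0 ≤ f x) (hg0 : ∀ x, 0 ≤ g x) (hh0 : ∀ x, 0 ≤ h x)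
    {a b c d : ℝ} (ha : 0 ≤ a) (hb : 0 ≤ b) (hc : 0 ≤ c) (hd : 0 ≤ d)
    (hs : a + b + c + d = 1) :
    ∫ x, f x ^ a * g x ^ b * h x ^ c ∂μ ≤
      (∫ x, f x ∂μ) ^ a * (∫ x, g x ∂μ) ^ b * (∫ x, h x ∂μ) ^ c * (μ.real Set.univ) ^ d := by
  have key := ENNReal.lintegral_prod_norm_pow_le (μ := μ) (Finset.univ : Finset (Fin 4))
    (f := ![fun x => ENNReal.ofReal (f x), fun x => ENNReal.ofReal (g x),
      fun x => ENNReal.ofReal (h x), fun _ => 1])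
    (by
      intro i _
      fin_cases i
      · exact hf.aemeasurable.ennreal_ofReal
      · exact hg.aemeasurable.ennreal_ofReal
      · exact hh.aemeasurable.ennreal_ofReal
      · exact aemeasurable_const)
    (p := ![a, b, c, d]) (by simpa [Fin.sum_univ_four] using hs)
    (by intro i _; fin_cases i <;> simpa)
  simp only [Fin.prod_univ_four, Matrix.cons_val, ENNReal.one_rpow, mul_one, lintegral_one] at key
  have If := (integral_nonneg hf0 : 0 ≤ ∫ x, f x ∂μ)
  have Ig := (integral_nonneg hg0 : 0 ≤ ∫ x, g x ∂μ)
  have Ih := (integral_nonneg hh0 : 0 ≤ ∫ x, h x ∂μ)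
  rw [← ofReal_integral_eq_lintegral_ofReal hf (.of_forall hf0),
    ← ofReal_integral_eq_lintegral_ofReal hg (.of_forall hg0),
    ← ofReal_integral_eq_lintegral_ofReal hh (.of_forall hh0),
    ← ofReal_measureReal,
    ENNReal.ofReal_rpow_of_nonneg If ha,
    ENNReal.ofReal_rpow_of_nonneg Ig hb,
    ENNReal.ofReal_rpow_of_nonneg Ih hc,
    ENNReal.ofReal_rpow_of_nonneg measureReal_nonneg hd] at key
  rw [← ENNReal.ofReal_mul (by positivity), ← ENNReal.ofReal_mul (by positivity),
    ← ENNReal.ofReal_mul (by positivity)] at key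
  have hnn : ∀ x, 0 ≤ f x ^ a * g x ^ b * h x ^ c := fun x =>
    mul_nonneg (mul_nonneg (Real.rpow_nonneg (hf0 x) _) (Real.rpow_nonneg (hg0 x) _))
      (Real.rpow_nonneg (hh0 x) _)
  rw [integral_eq_lintegral_of_nonneg_ae (.of_forall hnn)
    (((hf.aemeasurable.pow_const a).mul (hg.aemeasurable.pow_const b)).mul
      (hh.aemeasurable.pow_const c)).aestronglyMeasurable]
  refine ENNReal.toReal_le_of_le_ofReal (by positivity) ?_
  refine le_trans (le_of_eq (lintegral_congr fun x => ?_)) key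
  rw [ENNReal.ofReal_mul (mul_nonneg (Real.rpow_nonneg (hf0 x) _) (Real.rpow_nonneg (hg0 x) _)),
    ENNReal.ofReal_mul (Real.rpow_nonneg (hf0 x) _),
    ENNReal.ofReal_rpow_of_nonneg (hf0 x) ha, ENNReal.ofReal_rpow_of_nonneg (hg0 x) hb,
    ENNReal.ofReal_rpow_of_nonneg (hh0 x) hc]

theorem J6_estimate_iv (q r : ℝ) (hq1 : 1 ≤ q) (hq2 : q < 2) (hr1 : 2 ≤ r) (hr2 : r ≤ 6) :
    ∃ C : ℝ, 0 < C ∧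
      ∀ (R s t : ℝ) (v : EuclideanSpace ℝ (Fin 3) → EuclideanSpace ℝ (Fin 3))
        (θ : EuclideanSpace ℝ (Fin 3) → ℝ),
        0 < R → 3 * R / 2 ≤ s → s < t → t ≤ 2 * R →
        ContDiff ℝ (⊤ : ℕ∞) v → ContDiff ℝ (⊤ : ℕ∞) θ →
        (1 / (t - s)) * (∫ x in ball (0 : EuclideanSpace ℝ (Fin 3)) t \ ball 0 s,
            ‖v x‖ * |θ x|) ≤
          (C / (t - s)) * R ^ (3 * (1 / 2 - 1 / r))
            * lpS (fun x => ‖v x‖) q (ball 0 t \ ball 0 R) ^ (2 * q / (6 - q))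
            * lpS θ r (ball 0 t \ ball 0 R)
            * lpS (fun x => ‖v x‖) 6 (ball 0 t \ ball 0 R) ^ (3 * (2 - q) / (6 - q)) := by
  have hr0 : 0 < r := by linarith
  have h6 : 0 < 6 - q := by linarith
  have hd : 0 ≤ 1 / 2 - 1 / r := by
    have := one_div_le_one_div_of_le (by norm_num : (0:ℝ) < 2) hr1
    linarith
  have hb1 : 0 < volume.real (ball (0 : EuclideanSpace ℝ (Fin 3)) 1) :=
    ENNReal.toReal_pos (measure_ball_pos volume _ one_pos).ne' measure_ball_lt_top.ne
  refine ⟨(8 * volume.real (ball (0 : EuclideanSpace ℝ (Fin 3)) 1)) ^ (1 / 2 - 1 / r),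
    by positivity, ?_⟩
  intro R s t v θ hR hs hst ht hv hθ
  have hvc := hv.continuous
  have hθc := hθ.continuous
  set E := ball (0 : EuclideanSpace ℝ (Fin 3)) t \ ball 0 R with hE
  have hEm : MeasurableSet E := measurableSet_ball.diff measurableSet_ball
  have hint : ∀ {f : EuclideanSpace ℝ (Fin 3) → ℝ}, Continuous f → IntegrableOn f E := by
    intro f hf
    exact (hf.continuousOn.integrableOn_compact (isCompact_closedBall 0 t)).mono_set
      (Set.sdiff_subset.trans ball_subset_closedBall)
  have hfin : volume E ≠ ⊤ :=
    ((measure_mono Set.sdiff_subset).trans_lt measure_ball_lt_top).ne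
  have : IsFiniteMeasure (volume.restrict E) := ⟨by simpa using hfin.lt_top⟩
  have hvol : volume.real E ≤
      (8 * volume.real (ball (0 : EuclideanSpace ℝ (Fin 3)) 1)) * R ^ 3 := by
    have h1 : volume.real E ≤ volume.real (ball (0 : EuclideanSpace ℝ (Fin 3)) (2 * R)) :=
      measureReal_mono (Set.sdiff_subset.trans (ball_subset_ball ht)) measure_ball_lt_top.ne
    rw [measureReal_def (s := ball _ (2 * R)),
      Measure.addHaar_ball volume _ (by positivity : 0 ≤ 2 * R), ENNReal.toReal_mul,
      ENNReal.toReal_ofReal (by positivity), ← measureReal_def] at h1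
    simp only [finrank_euclideanSpace, Fintype.card_fin] at h1
    refine h1.trans (le_of_eq (by ring))
  have hc1 : Continuous fun x => ‖v x‖ ^ q :=
    hvc.norm.rpow_const fun _ => Or.inr (by linarith)
  have hc2 : Continuous fun x => ‖v x‖ ^ (6:ℝ) :=
    hvc.norm.rpow_const fun _ => Or.inr (by norm_num)
  have hc3 : Continuous fun x => |θ x| ^ r :=
    hθc.abs.rpow_const fun _ => Or.inr hr0.le
  have ha : 0 ≤ 2 / (6 - q) := by positivity
  have hb : 0 ≤ (2 - q) / (2 * (6 - q)) := div_nonneg (by linarith) (by linarith)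
  have H := holder_four (μ := volume.restrict E) (hint hc1) (hint hc2) (hint hc3)
    (fun x => by positivity) (fun x => by positivity) (fun x => by positivity)
    ha hb (one_div_nonneg.2 hr0.le) hd (by field_simp; ring)
  have hpt : ∀ x, (‖v x‖ ^ q) ^ (2 / (6 - q)) * (‖v x‖ ^ (6:ℝ)) ^ ((2 - q) / (2 * (6 - q)))
      * (|θ x| ^ r) ^ (1 / r) = ‖v x‖ * |θ x| := by
    intro x
    rw [← Real.rpow_mul (norm_nonneg _), ← Real.rpow_mul (norm_nonneg _),
      ← Real.rpow_mul (abs_nonneg _),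
      ← Real.rpow_add_of_nonneg (norm_nonneg _) (by positivity) (by positivity),
      mul_one_div_cancel hr0.ne', Real.rpow_one]
    have : q * (2 / (6 - q)) + 6 * ((2 - q) / (2 * (6 - q))) = 1 := by field_simp; ring
    rw [this, Real.rpow_one]
  simp only [hpt, measureReal_restrict_apply_univ] at H
  have hmono : ∫ x in ball (0 : EuclideanSpace ℝ (Fin 3)) t \ ball 0 s, ‖v x‖ * |θ x| ≤
      ∫ x in E, ‖v x‖ * |θ x| :=
    setIntegral_mono_set (hint (hvc.norm.mul hθc.abs)) (.of_forall fun x => by positivity)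
      (Set.sdiff_subset_sdiff_right (ball_subset_ball (by linarith))).eventuallyLE
  have hI1 : 0 ≤ ∫ x in E, ‖v x‖ ^ q := integral_nonneg fun x => by positivity
  have hI2 : 0 ≤ ∫ x in E, ‖v x‖ ^ (6:ℝ) := integral_nonneg fun x => by positivity
  have hI3 : 0 ≤ ∫ x in E, |θ x| ^ r := integral_nonneg fun x => by positivity
  have e1 : lpS (fun x => ‖v x‖) q E ^ (2 * q / (6 - q)) =
      (∫ x in E, ‖v x‖ ^ q) ^ (2 / (6 - q)) := by
    simp only [lpS, abs_norm]
    rw [← Real.rpow_mul hI1]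
    congr 1
    field_simp
  have e2 : lpS (fun x => ‖v x‖) 6 E ^ (3 * (2 - q) / (6 - q)) =
      (∫ x in E, ‖v x‖ ^ (6:ℝ)) ^ ((2 - q) / (2 * (6 - q))) := by
    simp only [lpS, abs_norm]
    rw [← Real.rpow_mul hI2]
    congr 1
    field_simp
    norm_num
  have hvol2 : volume.real E ^ (1 / 2 - 1 / r) ≤
      (8 * volume.real (ball (0 : EuclideanSpace ℝ (Fin 3)) 1)) ^ (1 / 2 - 1 / r)
        * R ^ (3 * (1 / 2 - 1 / r)) := by
    refine (Real.rpow_le_rpow measureReal_nonneg hvol hd).trans (le_of_eq ?_)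
    rw [Real.mul_rpow (by positivity) (by positivity), Real.rpow_mul hR.le]
    norm_num
  rw [e1, e2, lpS]
  have hts : 0 < t - s := by linarith
  calc _ ≤ 1 / (t - s) * ((∫ x in E, ‖v x‖ ^ q) ^ (2 / (6 - q))
        * (∫ x in E, ‖v x‖ ^ (6:ℝ)) ^ ((2 - q) / (2 * (6 - q)))
        * (∫ x in E, |θ x| ^ r) ^ (1 / r)
        * ((8 * volume.real (ball (0 : EuclideanSpace ℝ (Fin 3)) 1)) ^ (1 / 2 - 1 / r)
        * R ^ (3 * (1 / 2 - 1 / r)))) := by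
        refine mul_le_mul_of_nonneg_left (hmono.trans (H.trans ?_)) (by positivity)
        exact mul_le_mul_of_nonneg_left hvol2 (by positivity)
    _ = _ := by ring
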